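/- Let N ≥ 2 be an integer, p > 1, let f, F > 0 satisfy f^p ≤ F, and let κ ∈ (0,1]. Then for every u₀ with f ≤ u₀ ≤ min((F/f)^{1/(p−1)}, f/κ), there exists a nonnegative measurable function φ on [0,1) with ∫ φ dμ = f, ∫ φ^p dμ = F, and sup { ∫_E (M_N φ)^p dμ : E ⊆ [0,1) measurable, μ(E) = κ } = κ·u₀^p + ((N^p − 1)/(N^p − N))·(F − u₀^{p−1} f). -/

import Mathlib

open MeasureTheory Set Filter

/-- The `N`-adic interval `[k/N^m, (k+1)/N^m)` at level `m`. -/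
def adicItv (N m k : ℕ) : Set ℝ :=
  Set.Ico ((k : ℝ) / (N : ℝ) ^ m) (((k : ℝ) + 1) / (N : ℝ) ^ m)

/-- The average `(1/μ(I)) ∫_I |φ| dμ` of `φ` over the `N`-adic interval at level `m`, index `k`
(its measure is `N^{-m}`). -/
noncomputable def adicAvg (N : ℕ) (φ : ℝ → ℝ) (m k : ℕ) : ℝ :=
  (N : ℝ) ^ m * ∫ y in adicItv N m k, |φ y|

/-- The `N`-adic maximal operator on `[0,1)`:
`M_N φ(x) = sup { (1/μ(I)) ∫_I |φ| dμ : x ∈ I, I an N-adic interval }`. -/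
noncomputable def adicMax (N : ℕ) (φ : ℝ → ℝ) (x : ℝ) : ℝ :=
  sSup {r : ℝ | ∃ m k : ℕ, k < N ^ m ∧ x ∈ adicItv N m k ∧ r = adicAvg N φ m k}

/-- `sup { ∫_E (M_N φ)^p dμ : E ⊆ [0,1) measurable, μ(E) = κ }`. -/
noncomputable def supMeas (N : ℕ) (p κ : ℝ) (φ : ℝ → ℝ) : ℝ :=
  sSup {z : ℝ | ∃ E : Set ℝ, MeasurableSet E ∧ E ⊆ Set.Ico (0:ℝ) 1 ∧
    volume E = ENNReal.ofReal κ ∧ z = ∫ x in E, adicMax N φ x ^ p}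

/-! Over an `N`-adic interval `I` put `φ = u * N ^ k` on the leftmost `k`-th generation descendant
of `I` and `φ = 0` elsewhere. The averages of `φ` along the chain of leftmost descendants are
`u, u * N, …, u * N ^ k`, so `M_N φ` is a step function determined by how deep a point lies in the
chain, and summing a geometric series shows that `∫_I (M_N φ) ^ p - u ^ p |I|` equals
`(N ^ p - 1) / (N ^ p - N)` times `∫_I φ ^ p - u ^ p |I|`. Doing this over all maximal `N`-adic
subintervals of `[0, θ)` and setting `φ = u` on `[θ, f / u)` preserves this ratio, leaves `∫ φ = f`,
and lets the free parameter `θ` adjust `∫ φ ^ p` to any value that is at least `u ^ (p - 1) * f`.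
Large `k` makes `θ ≤ κ`, so that `[0, κ)` contains the whole set where `M_N φ > u` and is therefore
optimal among sets of measure `κ`. -/

section RealPowers

lemma mul_pow_rpow {u x : ℝ} (hu : 0 ≤ u) (hx : 0 ≤ x) (p : ℝ) (j : ℕ) :
    (u * x ^ j) ^ p = u ^ p * (x ^ p) ^ j := by
  rw [Real.mul_rpow hu (by positivity), Real.rpow_pow_comm hx]

lemma monotone_mul_pow_rpow {u x p : ℝ} (hu : 0 ≤ u) (hx : 1 ≤ x) (hp : 0 ≤ p) :
    Monotone fun j : ℕ ↦ (u * x ^ j) ^ p := by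
  intro i j hij
  beta_reduce
  gcongr

lemma rpow_sub_one_mul_le {p f F u : ℝ} (hp : 1 < p) (hf : 0 < f) (hF : 0 ≤ F) (hu : 0 ≤ u)
    (h : u ≤ (F / f) ^ (1 / (p - 1))) : u ^ (p - 1) * f ≤ F := by
  rw [one_div] at h
  exact (le_div_iff₀ hf).1
    ((Real.le_rpow_inv_iff_of_pos hu (div_nonneg hF hf.le) (sub_pos.2 hp)).1 h)

lemma sum_range_pow_succ_sub_pow_div_pow {𝕜 : Type*} [Field 𝕜] {X n : 𝕜} (hn : n ≠ 0)
    (hX : X ≠ n) (k : ℕ) :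
    ∑ j ∈ Finset.range k, (X ^ (j + 1) - X ^ j) / n ^ (j + 1) =
      (X - 1) / (X - n) * ((X / n) ^ k - 1) := by
  have hterm (j : ℕ) : (X ^ (j + 1) - X ^ j) / n ^ (j + 1) = (X - 1) / n * (X / n) ^ j := by
    rw [div_pow]
    field_simp
    ring
  have hsub : X - n ≠ 0 := sub_ne_zero.2 hX
  have hratio : X / n - 1 = (X - n) / n := by field_simp
  rw [Finset.sum_congr rfl fun j _ ↦ hterm j, ← Finset.mul_sum,
    geom_sum_eq (by rwa [Ne, div_eq_one_iff_eq hn]), hratio]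
  field_simp

lemma exists_mul_pow_sub_one_eq {r D κ : ℝ} (hr : 1 < r) (hD : 0 ≤ D) (hκ : 0 < κ) :
    ∃ (k : ℕ) (θ : ℝ), 0 ≤ θ ∧ θ ≤ κ ∧ θ * (r ^ k - 1) = D := by
  obtain ⟨k, hk⟩ := pow_unbounded_of_one_lt (1 + D / κ) hr
  have hratio : D / κ < r ^ k - 1 := lt_sub_iff_add_lt'.2 hk
  have hpos : 0 < r ^ k - 1 := (div_nonneg hD hκ.le).trans_lt hratio
  exact ⟨k, D / (r ^ k - 1), div_nonneg hD hpos.le, (div_lt_comm₀ hκ hpos).1 hratio |>.le,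
    div_mul_cancel₀ D hpos.ne'⟩

end RealPowers

section ChainDepth

variable {α : Type*} {A : ℕ → Set α}

open Classical in
/-- The depth of a point in a decreasing chain `A 0 ⊇ A 1 ⊇ ⋯ ⊇ A k`: the largest `j ≤ k` with
`x ∈ A j`. Points outside `A 0` also get depth `0`. -/
noncomputable def chainDepth (A : ℕ → Set α) (k : ℕ) (x : α) : ℕ :=
  Nat.findGreatest (fun j ↦ x ∈ A j) k

lemma chainDepth_le (A : ℕ → Set α) (k : ℕ) (x : α) : chainDepth A k x ≤ k := by
  classical exact Nat.findGreatest_le k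

lemma le_chainDepth {j k : ℕ} {x : α} (hjk : j ≤ k) (hx : x ∈ A j) : j ≤ chainDepth A k x := by
  classical exact Nat.le_findGreatest hjk hx

lemma mem_chainDepth (k : ℕ) {x : α} (hx : x ∈ A 0) : x ∈ A (chainDepth A k x) := by
  classical exact Nat.findGreatest_spec (P := fun j ↦ x ∈ A j) k.zero_le hx

lemma chainDepth_eq_zero (hA : Antitone A) (k : ℕ) {x : α} (hx : x ∉ A 0) :
    chainDepth A k x = 0 := by
  classical exact Nat.findGreatest_eq_zero_iff.2 fun j _ _ h ↦ hx (hA j.zero_le h)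

lemma apply_chainDepth (hA : Antitone A) {G : Type*} [AddCommGroup G] (a : ℕ → G) (k : ℕ) (x : α) :
    a (chainDepth A k x) =
      a 0 + ∑ j ∈ Finset.range k, (A (j + 1)).indicator (fun _ ↦ a (j + 1) - a j) x := by
  induction k with
  | zero => simp [chainDepth]
  | succ k ih =>
    rw [Finset.sum_range_succ, ← add_assoc, ← ih]
    by_cases hx : x ∈ A (k + 1)
    · have hk : x ∈ A k := hA k.le_succ hx
      simp [chainDepth, hx, hk]
    · simp [chainDepth, hx]

variable [MeasurableSpace α]

lemma integrable_apply_chainDepth (hA : Antitone A) (hAm : ∀ j, MeasurableSet (A j))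
    (a : ℕ → ℝ) (k : ℕ) (μ : Measure α) [IsFiniteMeasure μ] :
    Integrable (fun x ↦ a (chainDepth A k x)) μ := by
  simp only [apply_chainDepth hA]
  exact (integrable_const _).add
    (integrable_finsetSum _ fun j _ ↦ (integrable_const _).indicator (hAm _))

lemma integral_apply_chainDepth (hA : Antitone A) (hAm : ∀ j, MeasurableSet (A j))
    (a : ℕ → ℝ) (k : ℕ) (μ : Measure α) [IsFiniteMeasure μ] :
    ∫ x, a (chainDepth A k x) ∂μ =
      a 0 * μ.real univ + ∑ j ∈ Finset.range k, (a (j + 1) - a j) * μ.real (A (j + 1)) := by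
  have hint (j : ℕ) : Integrable ((A (j + 1)).indicator fun _ ↦ a (j + 1) - a j) μ :=
    (integrable_const _).indicator (hAm _)
  simp only [apply_chainDepth hA]
  rw [integral_add (integrable_const _) (integrable_finsetSum _ fun j _ ↦ hint j),
    integral_finsetSum _ fun j _ ↦ hint j]
  simp only [integral_indicator_const _ (hAm _), integral_const, smul_eq_mul, mul_comm]

lemma integral_apply_chainDepth_le (hA : Antitone A) (hAm : ∀ j, MeasurableSet (A j))
    {a : ℕ → ℝ} (ha : Monotone a) (k : ℕ) {μ ν : Measure α} [IsFiniteMeasure μ] [IsFiniteMeasure ν]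
    (huniv : μ univ = ν univ) (hle : ∀ j, μ (A j) ≤ ν (A j)) :
    ∫ x, a (chainDepth A k x) ∂μ ≤ ∫ x, a (chainDepth A k x) ∂ν := by
  rw [integral_apply_chainDepth hA hAm, integral_apply_chainDepth hA hAm, measureReal_def,
    huniv, ← measureReal_def]
  gcongr with j
  · exact sub_nonneg.2 (ha j.le_succ)
  · exact ENNReal.toReal_mono (measure_ne_top ν _) (hle _)

end ChainDepth

section AdicIntervals

variable {N : ℕ}

lemma mem_adicItv_iff_floor (hN : 0 < N) {m k : ℕ} {x : ℝ} :
    x ∈ adicItv N m k ↔ ⌊x * (N : ℝ) ^ m⌋ = k := by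
  have hpos : (0 : ℝ) < (N : ℝ) ^ m := by positivity
  rw [adicItv, Set.mem_Ico, div_le_iff₀ hpos, lt_div_iff₀ hpos, Int.floor_eq_iff, Int.cast_natCast]

lemma measurableSet_adicItv (N m k : ℕ) : MeasurableSet (adicItv N m k) := measurableSet_Ico

lemma volume_adicItv (N m k : ℕ) :
    volume (adicItv N m k) = ENNReal.ofReal ((N : ℝ) ^ m)⁻¹ := by
  rw [adicItv, Real.volume_Ico]
  congr 1
  ring

lemma volume_adicItv_ne_top (N m k : ℕ) : volume (adicItv N m k) ≠ ⊤ := by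
  simp [volume_adicItv]

lemma volume_real_adicItv (N m k : ℕ) : volume.real (adicItv N m k) = ((N : ℝ) ^ m)⁻¹ := by
  rw [measureReal_def, volume_adicItv, ENNReal.toReal_ofReal (by positivity)]

lemma volume_real_inter_adicItv_le (N m k : ℕ) (J : Set ℝ) :
    volume.real (J ∩ adicItv N m k) ≤ ((N : ℝ) ^ m)⁻¹ := by
  rw [← volume_real_adicItv N m k]
  exact measureReal_mono inter_subset_right (volume_adicItv_ne_top N m k)

lemma eq_of_mem_adicItv (hN : 0 < N) {m k l : ℕ} {x : ℝ} (hk : x ∈ adicItv N m k)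
    (hl : x ∈ adicItv N m l) : k = l := by
  rw [mem_adicItv_iff_floor hN] at hk hl
  exact_mod_cast hk.symm.trans hl

lemma adicItv_add_subset (hN : 0 < N) (m d l : ℕ) :
    adicItv N (m + d) l ⊆ adicItv N m (l / N ^ d) := by
  intro x hx
  rw [mem_adicItv_iff_floor hN] at hx ⊢
  have hscale : x * (N : ℝ) ^ m = x * (N : ℝ) ^ (m + d) / (N ^ d : ℕ) := by
    push_cast
    rw [pow_add]
    field_simp
  rw [hscale, Int.floor_div_natCast, hx]
  norm_cast

lemma adicItv_subset_of_mem (hN : 0 < N) {m m' k l : ℕ} {x : ℝ} (hm : m ≤ m')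
    (hk : x ∈ adicItv N m k) (hl : x ∈ adicItv N m' l) : adicItv N m' l ⊆ adicItv N m k := by
  obtain ⟨d, rfl⟩ := Nat.exists_eq_add_of_le hm
  have hsub := adicItv_add_subset hN m d l
  rwa [eq_of_mem_adicItv hN (hsub hl) hk] at hsub

lemma lt_pow_of_mem_adicItv (hN : 0 < N) {m k : ℕ} {x : ℝ} (hx : x < 1)
    (h : x ∈ adicItv N m k) : k < N ^ m := by
  have hpos : (0 : ℝ) < (N : ℝ) ^ m := by positivity
  have : (k : ℝ) < (N : ℝ) ^ m := (div_lt_one hpos).1 (h.1.trans_lt hx)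
  exact_mod_cast this

/-- A set is `N`-adically open if it contains an `N`-adic interval around each of its points, i.e.
if it is a union of `N`-adic intervals. -/
def IsAdicOpen (N : ℕ) (T : Set ℝ) : Prop :=
  ∀ x ∈ T, ∃ m k : ℕ, x ∈ adicItv N m k ∧ adicItv N m k ⊆ T

lemma isAdicOpen_Ico_zero (hN : 1 < N) (b : ℝ) : IsAdicOpen N (Ico 0 b) := by
  intro x hx
  obtain ⟨m, hm⟩ := pow_unbounded_of_one_lt (1 / (b - x)) (Nat.one_lt_cast.2 hN : (1 : ℝ) < N)
  have hpos : (0 : ℝ) < (N : ℝ) ^ m := by positivity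
  have hlen : 1 / (N : ℝ) ^ m < b - x := (one_div_lt (sub_pos.2 hx.2) hpos).1 hm
  have hmem : x ∈ adicItv N m ⌊x * (N : ℝ) ^ m⌋₊ := by
    rw [mem_adicItv_iff_floor (by lia), Int.natCast_floor_eq_floor (mul_nonneg hx.1 hpos.le)]
  refine ⟨m, _, hmem, fun y hy ↦ ⟨le_trans (by positivity) hy.1, hy.2.trans ?_⟩⟩
  rw [add_div]
  linarith [hmem.1]

/-- The pieces are the maximal `N`-adic intervals inside `T`. -/
lemma IsAdicOpen.exists_partition (hN : 0 < N) {T : Set ℝ} (hT : IsAdicOpen N T) :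
    ∃ S : Set (ℕ × ℕ), (S.PairwiseDisjoint fun s ↦ adicItv N s.1 s.2) ∧
      ⋃ s ∈ S, adicItv N s.1 s.2 = T := by
  classical
  let S : Set (ℕ × ℕ) := {s | adicItv N s.1 s.2 ⊆ T ∧
    ∀ m k, adicItv N s.1 s.2 ⊆ adicItv N m k → adicItv N m k ⊆ T → s.1 ≤ m}
  have level_le {s t : ℕ × ℕ} (hs : s ∈ S) (ht : t ∈ S) {x : ℝ} (hxs : x ∈ adicItv N s.1 s.2)
      (hxt : x ∈ adicItv N t.1 t.2) : s.1 ≤ t.1 := by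
    by_contra! hlt
    exact hlt.not_ge (hs.2 _ _ (adicItv_subset_of_mem hN hlt.le hxt hxs) ht.1)
  refine ⟨S, fun s hs t ht hst ↦ Set.disjoint_left.2 fun x hxs hxt ↦ hst ?_, ?_⟩
  · have hlevel : s.1 = t.1 := (level_le hs ht hxs hxt).antisymm (level_le ht hs hxt hxs)
    exact Prod.ext hlevel (eq_of_mem_adicItv hN hxs (hlevel ▸ hxt))
  · refine Subset.antisymm (iUnion₂_subset fun s hs ↦ hs.1) fun x hx ↦ ?_
    obtain ⟨k, hxk, hkT⟩ := Nat.find_spec (hT x hx)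
    refine mem_biUnion (x := (Nat.find (hT x hx), k)) ⟨hkT, fun m l hsub hlT ↦ ?_⟩ hxk
    exact Nat.find_min' (hT x hx) ⟨l, hsub hxk, hlT⟩

end AdicIntervals

section AdicTower

variable {N : ℕ} {S : Set (ℕ × ℕ)}

/-- The leftmost `j`-th generation descendant of the `N`-adic interval with level `s.1` and
index `s.2`. -/
def leftDescendant (N j : ℕ) (s : ℕ × ℕ) : Set ℝ := adicItv N (s.1 + j) (s.2 * N ^ j)

/-- The union of the leftmost `j`-th generation descendants of the intervals in a family `S` of
`N`-adic intervals, each encoded as a pair (level, index). In particular `adicTower N S 0` is the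
union of the family itself. -/
def adicTower (N : ℕ) (S : Set (ℕ × ℕ)) (j : ℕ) : Set ℝ := ⋃ s ∈ S, leftDescendant N j s

/-- A set is saturated for a family `S` of `N`-adic intervals if it cuts none of them. -/
def IsSaturated (N : ℕ) (S : Set (ℕ × ℕ)) (J : Set ℝ) : Prop :=
  ∀ s ∈ S, adicItv N s.1 s.2 ⊆ J ∨ Disjoint (adicItv N s.1 s.2) J

lemma leftDescendant_zero (N : ℕ) (s : ℕ × ℕ) : leftDescendant N 0 s = adicItv N s.1 s.2 := by
  simp [leftDescendant]

lemma leftDescendant_antitone (hN : 0 < N) (s : ℕ × ℕ) :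
    Antitone fun j ↦ leftDescendant N j s := by
  intro i j hij
  obtain ⟨d, rfl⟩ := Nat.exists_eq_add_of_le hij
  have hsub := adicItv_add_subset hN (s.1 + i) d (s.2 * N ^ (i + d))
  rwa [pow_add, ← mul_assoc, Nat.mul_div_cancel _ (by positivity), mul_assoc, ← pow_add,
    add_assoc] at hsub

lemma leftDescendant_subset (hN : 0 < N) (j : ℕ) (s : ℕ × ℕ) :
    leftDescendant N j s ⊆ adicItv N s.1 s.2 :=
  leftDescendant_zero N s ▸ leftDescendant_antitone hN s j.zero_le

lemma volume_leftDescendant (N j : ℕ) (s : ℕ × ℕ) :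
    volume (leftDescendant N j s) =
      ENNReal.ofReal ((N : ℝ) ^ j)⁻¹ * volume (adicItv N s.1 s.2) := by
  rw [leftDescendant, volume_adicItv, volume_adicItv, ← ENNReal.ofReal_mul (by positivity),
    pow_add, mul_inv_rev]

lemma pow_mul_volume_real_leftDescendant_inter_le (hN : 0 < N) (s : ℕ × ℕ) (i k l : ℕ) :
    (N : ℝ) ^ (s.1 + i + k) * volume.real (leftDescendant N k s ∩ adicItv N (s.1 + i) l) ≤
      (N : ℝ) ^ min i k := by
  have hvol : volume.real (leftDescendant N k s ∩ adicItv N (s.1 + i) l) ≤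
      ((N : ℝ) ^ (s.1 + max i k))⁻¹ := by
    rcases le_total i k with hik | hki
    · rw [max_eq_right hik, inter_comm]
      exact volume_real_inter_adicItv_le _ _ _ _
    · rw [max_eq_left hki]
      exact volume_real_inter_adicItv_le _ _ _ _
  calc (N : ℝ) ^ (s.1 + i + k) * volume.real (leftDescendant N k s ∩ adicItv N (s.1 + i) l)
      ≤ (N : ℝ) ^ (s.1 + i + k) * ((N : ℝ) ^ (s.1 + max i k))⁻¹ := by gcongr
    _ = (N : ℝ) ^ min i k := by
      rw [add_assoc, ← min_add_max i k, add_left_comm, pow_add,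
        mul_inv_cancel_right₀ (by positivity)]

lemma mem_adicTower {j : ℕ} {x : ℝ} : x ∈ adicTower N S j ↔ ∃ s ∈ S, x ∈ leftDescendant N j s := by
  simp only [adicTower, mem_iUnion, exists_prop]

lemma adicTower_zero (N : ℕ) (S : Set (ℕ × ℕ)) :
    adicTower N S 0 = ⋃ s ∈ S, adicItv N s.1 s.2 := by
  simp only [adicTower, leftDescendant_zero]

lemma adicItv_subset_adicTower_zero {s : ℕ × ℕ} (hs : s ∈ S) :
    adicItv N s.1 s.2 ⊆ adicTower N S 0 := by
  rw [adicTower_zero]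
  exact subset_biUnion_of_mem (u := fun s : ℕ × ℕ ↦ adicItv N s.1 s.2) hs

lemma adicTower_antitone (hN : 0 < N) (S : Set (ℕ × ℕ)) : Antitone (adicTower N S) :=
  fun _ _ hij ↦ iUnion₂_mono fun s _ ↦ leftDescendant_antitone hN s hij

lemma measurableSet_adicTower (N : ℕ) (S : Set (ℕ × ℕ)) (j : ℕ) :
    MeasurableSet (adicTower N S j) :=
  MeasurableSet.biUnion S.to_countable fun _ _ ↦ measurableSet_adicItv _ _ _

lemma isSaturated_of_adicTower_zero_subset {J : Set ℝ} (hJ : adicTower N S 0 ⊆ J) :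
    IsSaturated N S J :=
  fun _ hs ↦ Or.inl ((adicItv_subset_adicTower_zero hs).trans hJ)

lemma isSaturated_adicItv_or_subset (hN : 0 < N) (S : Set (ℕ × ℕ)) (m l : ℕ) :
    IsSaturated N S (adicItv N m l) ∨
      ∃ s ∈ S, s.1 ≤ m ∧ adicItv N m l ⊆ adicItv N s.1 s.2 := by
  refine or_iff_not_imp_right.2 fun hcut s hs ↦ or_iff_not_imp_right.2 fun hmeet ↦ ?_
  obtain ⟨x, hxs, hxl⟩ := not_disjoint_iff.1 hmeet
  rcases le_total s.1 m with h | h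
  · exact absurd ⟨s, hs, h, adicItv_subset_of_mem hN h hxs hxl⟩ hcut
  · exact adicItv_subset_of_mem hN h hxl hxs

lemma adicTower_inter_of_subset (hN : 0 < N)
    (hS : S.PairwiseDisjoint fun s ↦ adicItv N s.1 s.2) {s : ℕ × ℕ} (hs : s ∈ S) {J : Set ℝ}
    (hJ : J ⊆ adicItv N s.1 s.2) (j : ℕ) :
    adicTower N S j ∩ J = leftDescendant N j s ∩ J := by
  refine Subset.antisymm (fun x hx ↦ ⟨?_, hx.2⟩)
    (inter_subset_inter_left _ fun x hx ↦ mem_adicTower.2 ⟨s, hs, hx⟩)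
  obtain ⟨t, ht, hxt⟩ := mem_adicTower.1 hx.1
  rwa [hS.elim_set hs ht x (hJ hx.2) (leftDescendant_subset hN j t hxt)]

lemma volume_adicTower_inter_eq_tsum (hN : 0 < N)
    (hS : S.PairwiseDisjoint fun s ↦ adicItv N s.1 s.2) (j : ℕ) {J : Set ℝ}
    (hJ : MeasurableSet J) :
    volume (adicTower N S j ∩ J) = ∑' s : S, volume (leftDescendant N j s ∩ J) := by
  rw [adicTower, iUnion₂_inter]
  refine measure_biUnion S.to_countable (hS.mono_on fun s _ ↦ ?_)
    fun s _ ↦ (measurableSet_adicItv _ _ _).inter hJ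
  exact inter_subset_left.trans (leftDescendant_subset hN j s)

lemma volume_real_adicTower_inter (hN : 0 < N)
    (hS : S.PairwiseDisjoint fun s ↦ adicItv N s.1 s.2) (j : ℕ) {J : Set ℝ}
    (hJ : MeasurableSet J) (hSJ : IsSaturated N S J) :
    volume.real (adicTower N S j ∩ J) =
      ((N : ℝ) ^ j)⁻¹ * volume.real (adicTower N S 0 ∩ J) := by
  have hscale (s : S) : volume (leftDescendant N j s ∩ J) =
      ENNReal.ofReal ((N : ℝ) ^ j)⁻¹ * volume (leftDescendant N 0 s ∩ J) := by
    have hsub := leftDescendant_subset hN j (s : ℕ × ℕ)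
    rw [leftDescendant_zero]
    rcases hSJ s s.2 with hin | hout
    · rw [inter_eq_left.2 hin, inter_eq_left.2 (hsub.trans hin), volume_leftDescendant]
    · rw [hout.inter_eq, (hout.mono_left hsub).inter_eq, measure_empty, mul_zero]
  rw [measureReal_def, volume_adicTower_inter_eq_tsum hN hS j hJ, tsum_congr hscale,
    ENNReal.tsum_mul_left, ← volume_adicTower_inter_eq_tsum hN hS 0 hJ, ENNReal.toReal_mul,
    ENNReal.toReal_ofReal (by positivity), measureReal_def]

lemma volume_real_adicTower (hN : 0 < N)
    (hS : S.PairwiseDisjoint fun s ↦ adicItv N s.1 s.2) (j : ℕ) :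
    volume.real (adicTower N S j) = ((N : ℝ) ^ j)⁻¹ * volume.real (adicTower N S 0) := by
  simpa only [inter_univ] using volume_real_adicTower_inter hN hS j MeasurableSet.univ
    (isSaturated_of_adicTower_zero_subset (subset_univ _))

end AdicTower

section TowerFun

variable {N : ℕ} {S : Set (ℕ × ℕ)} {B : Set ℝ} {k : ℕ} {u : ℝ}

/-- The extremal function: it equals `u * N ^ k` on the `k`-th level of the tower over `S`, vanishes
on the rest of `adicTower N S 0`, and equals `u` on the remaining part of `B`. -/
noncomputable def towerFun (N : ℕ) (S : Set (ℕ × ℕ)) (B : Set ℝ) (k : ℕ) (u x : ℝ) : ℝ :=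
  (adicTower N S k).indicator (fun _ ↦ u * (N : ℝ) ^ k) x +
    (B \ adicTower N S 0).indicator (fun _ ↦ u) x

lemma towerFun_nonneg (N : ℕ) (S : Set (ℕ × ℕ)) (B : Set ℝ) (k : ℕ) (hu : 0 ≤ u) (x : ℝ) :
    0 ≤ towerFun N S B k u x :=
  add_nonneg (indicator_nonneg (fun _ _ ↦ by positivity) _) (indicator_nonneg (fun _ _ ↦ hu) _)

lemma measurable_towerFun (N : ℕ) (S : Set (ℕ × ℕ)) (hB : MeasurableSet B) (k : ℕ) (u : ℝ) :
    Measurable (towerFun N S B k u) :=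
  (measurable_const.indicator (measurableSet_adicTower N S k)).add
    (measurable_const.indicator (hB.diff (measurableSet_adicTower N S 0)))

lemma towerFun_rpow (hN : 0 < N) (x : ℝ) {q : ℝ} (hq : q ≠ 0) :
    towerFun N S B k u x ^ q =
      (adicTower N S k).indicator (fun _ ↦ (u * (N : ℝ) ^ k) ^ q) x +
        (B \ adicTower N S 0).indicator (fun _ ↦ u ^ q) x := by
  by_cases hk : x ∈ adicTower N S k
  · have h0 : x ∈ adicTower N S 0 := adicTower_antitone hN S k.zero_le hk
    simp [towerFun, hk, h0]
  · by_cases hB : x ∈ B \ adicTower N S 0 <;> simp only [towerFun, hk, hB, not_false_eq_true,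
      indicator_of_notMem, indicator_of_mem, zero_add, add_zero, Real.zero_rpow hq]

lemma setIntegral_towerFun_rpow (hN : 0 < N) (hB : MeasurableSet B) {q : ℝ} (hq : q ≠ 0)
    {J : Set ℝ} (hJ : volume J ≠ ⊤) :
    ∫ x in J, towerFun N S B k u x ^ q =
      (u * (N : ℝ) ^ k) ^ q * volume.real (adicTower N S k ∩ J) +
        u ^ q * volume.real ((B \ adicTower N S 0) ∩ J) := by
  have := isFiniteMeasure_restrict.2 hJ
  have hk := measurableSet_adicTower N S k
  have hdiff := hB.diff (measurableSet_adicTower N S 0)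
  simp_rw [towerFun_rpow hN _ hq]
  rw [integral_add ((integrable_const _).indicator hk) ((integrable_const _).indicator hdiff),
    integral_indicator_const _ hk, integral_indicator_const _ hdiff,
    measureReal_restrict_apply hk, measureReal_restrict_apply hdiff]
  simp only [smul_eq_mul, mul_comm]

lemma setIntegral_towerFun_rpow_of_subset (hN : 0 < N)
    (hS : S.PairwiseDisjoint fun s ↦ adicItv N s.1 s.2) (hB : MeasurableSet B)
    (hSB : adicTower N S 0 ⊆ B) {J : Set ℝ} (hBJ : B ⊆ J) (hJ : volume J ≠ ⊤) (hu : 0 ≤ u)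
    {p : ℝ} (hp : p ≠ 0) :
    ∫ x in J, towerFun N S B k u x ^ p =
      u ^ p * (volume.real B + volume.real (adicTower N S 0) * (((N : ℝ) ^ p / N) ^ k - 1)) := by
  have hkJ : adicTower N S k ⊆ J := ((adicTower_antitone hN S k.zero_le).trans hSB).trans hBJ
  rw [setIntegral_towerFun_rpow hN hB hp hJ, inter_eq_left.2 hkJ,
    inter_eq_left.2 (sdiff_subset.trans hBJ), volume_real_adicTower hN hS,
    measureReal_sdiff hSB (measurableSet_adicTower N S 0)
      (measure_ne_top_of_subset hBJ hJ), mul_pow_rpow hu (by positivity), div_pow]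
  ring

lemma setIntegral_towerFun (hN : 0 < N) (hB : MeasurableSet B) {J : Set ℝ}
    (hJ : volume J ≠ ⊤) :
    ∫ x in J, towerFun N S B k u x =
      u * (N : ℝ) ^ k * volume.real (adicTower N S k ∩ J) +
        u * volume.real ((B \ adicTower N S 0) ∩ J) := by
  simpa only [Real.rpow_one] using setIntegral_towerFun_rpow hN hB one_ne_zero hJ

lemma setIntegral_towerFun_of_isSaturated (hN : 0 < N)
    (hS : S.PairwiseDisjoint fun s ↦ adicItv N s.1 s.2) (hB : MeasurableSet B)
    (hSB : adicTower N S 0 ⊆ B) {J : Set ℝ} (hJm : MeasurableSet J) (hJ : volume J ≠ ⊤)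
    (hSJ : IsSaturated N S J) :
    ∫ x in J, towerFun N S B k u x = u * volume.real (B ∩ J) := by
  have hsplit : volume.real (B ∩ J) =
      volume.real (adicTower N S 0 ∩ J) + volume.real ((B \ adicTower N S 0) ∩ J) := by
    have hfin : volume (B ∩ J) ≠ ⊤ := measure_ne_top_of_subset inter_subset_right hJ
    rw [← measureReal_inter_add_sdiff (measurableSet_adicTower N S 0) hfin, inter_right_comm,
      inter_eq_right.2 hSB, sdiff_inter_right_comm]
  have hNk : (N : ℝ) ^ k ≠ 0 := by positivity
  rw [setIntegral_towerFun hN hB hJ, volume_real_adicTower_inter hN hS k hJm hSJ, hsplit]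
  field_simp

lemma adicAvg_towerFun (N : ℕ) (S : Set (ℕ × ℕ)) (B : Set ℝ) (k : ℕ) (hu : 0 ≤ u) (m l : ℕ) :
    adicAvg N (towerFun N S B k u) m l =
      (N : ℝ) ^ m * ∫ x in adicItv N m l, towerFun N S B k u x := by
  simp only [adicAvg, abs_of_nonneg (towerFun_nonneg N S B k hu _)]

lemma adicAvg_towerFun_of_isSaturated (hN : 0 < N)
    (hS : S.PairwiseDisjoint fun s ↦ adicItv N s.1 s.2) (hB : MeasurableSet B)
    (hSB : adicTower N S 0 ⊆ B) (hu : 0 ≤ u) {m l : ℕ} (hSI : IsSaturated N S (adicItv N m l)) :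
    adicAvg N (towerFun N S B k u) m l =
      u * ((N : ℝ) ^ m * volume.real (B ∩ adicItv N m l)) := by
  rw [adicAvg_towerFun N S B k hu, setIntegral_towerFun_of_isSaturated hN hS hB hSB
    (measurableSet_adicItv N m l) (volume_adicItv_ne_top N m l) hSI, mul_left_comm]

lemma adicAvg_towerFun_of_subset (hN : 0 < N)
    (hS : S.PairwiseDisjoint fun s ↦ adicItv N s.1 s.2) (hB : MeasurableSet B) (hu : 0 ≤ u)
    {s : ℕ × ℕ} (hs : s ∈ S) {m l : ℕ} (hI : adicItv N m l ⊆ adicItv N s.1 s.2) :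
    adicAvg N (towerFun N S B k u) m l =
      u * ((N : ℝ) ^ (m + k) * volume.real (leftDescendant N k s ∩ adicItv N m l)) := by
  have hrest : (B \ adicTower N S 0) ∩ adicItv N m l = ∅ :=
    (disjoint_sdiff_left.mono_right (hI.trans (adicItv_subset_adicTower_zero hs))).inter_eq
  rw [adicAvg_towerFun N S B k hu, setIntegral_towerFun hN hB (volume_adicItv_ne_top N m l), hrest,
    adicTower_inter_of_subset hN hS hs hI, measureReal_empty, pow_add]
  ring

/-- If `i` generations separate the interval from the family member containing it, its average is
at most `u * N ^ min i k`, and it vanishes unless the interval lies in tower level `min i k`. -/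
lemma adicAvg_towerFun_le (hN : 0 < N)
    (hS : S.PairwiseDisjoint fun s ↦ adicItv N s.1 s.2) (hB : MeasurableSet B)
    (hSB : adicTower N S 0 ⊆ B) (hu : 0 ≤ u) {m l : ℕ} {x : ℝ} (hx : x ∈ adicItv N m l) :
    adicAvg N (towerFun N S B k u) m l ≤ u * (N : ℝ) ^ chainDepth (adicTower N S) k x := by
  have hN1 : (1 : ℝ) ≤ N := by exact_mod_cast hN
  rcases isSaturated_adicItv_or_subset hN S m l with hsat | ⟨s, hs, hsm, hI⟩
  · rw [adicAvg_towerFun_of_isSaturated hN hS hB hSB hu hsat]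
    gcongr
    calc (N : ℝ) ^ m * volume.real (B ∩ adicItv N m l)
        ≤ (N : ℝ) ^ m * ((N : ℝ) ^ m)⁻¹ := by gcongr; exact volume_real_inter_adicItv_le N m l B
      _ = 1 := mul_inv_cancel₀ (by positivity)
      _ ≤ (N : ℝ) ^ chainDepth (adicTower N S) k x := one_le_pow₀ hN1
  obtain ⟨i, rfl⟩ := Nat.exists_eq_add_of_le hsm
  rw [adicAvg_towerFun_of_subset hN hS hB hu hs hI]
  gcongr
  by_cases hxi : x ∈ leftDescendant N (min i k) s
  · calc (N : ℝ) ^ (s.1 + i + k) * volume.real (leftDescendant N k s ∩ adicItv N (s.1 + i) l)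
        ≤ (N : ℝ) ^ min i k := pow_mul_volume_real_leftDescendant_inter_le hN s i k l
      _ ≤ (N : ℝ) ^ chainDepth (adicTower N S) k x :=
        pow_le_pow_right₀ hN1 (le_chainDepth (min_le_right i k) (mem_adicTower.2 ⟨s, hs, hxi⟩))
  · have hdisj : Disjoint (leftDescendant N k s) (adicItv N (s.1 + i) l) := by
      refine disjoint_left.2 fun y hyk hyi ↦ hxi ?_
      exact adicItv_subset_of_mem hN (by lia)
        (leftDescendant_antitone hN s (min_le_right i k) hyk) hyi hx
    rw [hdisj.inter_eq, measureReal_empty, mul_zero]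
    positivity

lemma exists_adicAvg_towerFun_eq (hN : 0 < N)
    (hS : S.PairwiseDisjoint fun s ↦ adicItv N s.1 s.2) (hB : MeasurableSet B)
    (hBo : IsAdicOpen N B) (hSB : adicTower N S 0 ⊆ B) (hu : 0 ≤ u) {x : ℝ} (hx : x ∈ B) :
    ∃ m l : ℕ, x ∈ adicItv N m l ∧
      adicAvg N (towerFun N S B k u) m l = u * (N : ℝ) ^ chainDepth (adicTower N S) k x := by
  by_cases hx0 : x ∈ adicTower N S 0
  · obtain ⟨s, hs, hxs⟩ := mem_adicTower.1 (mem_chainDepth k hx0)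
    set c := chainDepth (adicTower N S) k x
    refine ⟨_, _, hxs, ?_⟩
    have hck : leftDescendant N k s ⊆ leftDescendant N c s :=
      leftDescendant_antitone hN s (chainDepth_le _ k x)
    rw [adicAvg_towerFun_of_subset hN hS hB hu hs (leftDescendant_subset hN c s),
      ← leftDescendant, inter_eq_left.2 hck, leftDescendant, volume_real_adicItv,
      add_right_comm, pow_add _ (s.1 + k), mul_right_comm, mul_inv_cancel₀ (by positivity), one_mul]
  · obtain ⟨m, l, hxI, hIB⟩ := hBo x hx
    have hsat : IsSaturated N S (adicItv N m l) :=
      (isSaturated_adicItv_or_subset hN S m l).resolve_right fun ⟨_, hs, _, hsub⟩ ↦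
        hx0 (adicItv_subset_adicTower_zero hs (hsub hxI))
    refine ⟨m, l, hxI, ?_⟩
    rw [adicAvg_towerFun_of_isSaturated hN hS hB hSB hu hsat, inter_eq_right.2 hIB,
      volume_real_adicItv, mul_inv_cancel₀ (by positivity),
      chainDepth_eq_zero (adicTower_antitone hN S) k hx0, pow_zero]

lemma adicMax_nonneg (N : ℕ) (φ : ℝ → ℝ) (x : ℝ) : 0 ≤ adicMax N φ x := by
  refine Real.sSup_nonneg ?_
  rintro _ ⟨m, l, -, -, rfl⟩
  exact mul_nonneg (by positivity) (integral_nonneg fun _ ↦ abs_nonneg _)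

lemma adicMax_towerFun_le (hN : 0 < N)
    (hS : S.PairwiseDisjoint fun s ↦ adicItv N s.1 s.2) (hB : MeasurableSet B)
    (hSB : adicTower N S 0 ⊆ B) (hu : 0 ≤ u) (x : ℝ) :
    adicMax N (towerFun N S B k u) x ≤ u * (N : ℝ) ^ chainDepth (adicTower N S) k x := by
  refine Real.sSup_le ?_ (by positivity)
  rintro _ ⟨m, l, -, hx, rfl⟩
  exact adicAvg_towerFun_le hN hS hB hSB hu hx

lemma adicMax_towerFun_eq (hN : 0 < N)
    (hS : S.PairwiseDisjoint fun s ↦ adicItv N s.1 s.2) (hB : MeasurableSet B)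
    (hBo : IsAdicOpen N B) (hSB : adicTower N S 0 ⊆ B) (hu : 0 ≤ u) {x : ℝ} (hx : x ∈ B)
    (hx1 : x < 1) :
    adicMax N (towerFun N S B k u) x = u * (N : ℝ) ^ chainDepth (adicTower N S) k x := by
  obtain ⟨m, l, hxI, havg⟩ := exists_adicAvg_towerFun_eq (k := k) hN hS hB hBo hSB hu hx
  refine IsGreatest.csSup_eq ⟨⟨m, l, lt_pow_of_mem_adicItv hN hx1 hxI, hxI, havg.symm⟩, ?_⟩
  rintro _ ⟨m, l, -, hxI, rfl⟩
  exact adicAvg_towerFun_le hN hS hB hSB hu hxI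

end TowerFun

section SupMeas

variable {N : ℕ} {S : Set (ℕ × ℕ)} {B K : Set ℝ} {k : ℕ} {u p : ℝ}

lemma supMeas_towerFun_eq_setIntegral (hN : 0 < N)
    (hS : S.PairwiseDisjoint fun s ↦ adicItv N s.1 s.2) (hB : MeasurableSet B)
    (hBo : IsAdicOpen N B) (hK : MeasurableSet K) (hSK : adicTower N S 0 ⊆ K) (hKB : K ⊆ B)
    (hB1 : B ⊆ Ico 0 1) (hu : 0 ≤ u) (hp : 0 ≤ p) :
    supMeas N p (volume.real K) (towerFun N S B k u) =
      ∫ x in K, (u * (N : ℝ) ^ chainDepth (adicTower N S) k x) ^ p := by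
  have hanti := adicTower_antitone hN S
  have hmeas := measurableSet_adicTower N S
  have hSB := hSK.trans hKB
  have hKfin : volume K ≠ ⊤ := measure_ne_top_of_subset (hKB.trans hB1) (by simp)
  have hKvol : ENNReal.ofReal (volume.real K) = volume K := ENNReal.ofReal_toReal hKfin
  have := isFiniteMeasure_restrict.2 hKfin
  refine IsGreatest.csSup_eq ⟨⟨K, hK, hKB.trans hB1, hKvol.symm, ?_⟩, ?_⟩
  · refine setIntegral_congr_fun hK fun x hx ↦ ?_
    simp only [adicMax_towerFun_eq hN hS hB hBo hSB hu (hKB hx) (hB1 (hKB hx)).2]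
  rintro _ ⟨E, -, -, hEvol, rfl⟩
  rw [hKvol] at hEvol
  have := isFiniteMeasure_restrict.2 (hEvol ▸ hKfin)
  calc ∫ x in E, adicMax N (towerFun N S B k u) x ^ p
      ≤ ∫ x in E, (u * (N : ℝ) ^ chainDepth (adicTower N S) k x) ^ p :=
        integral_mono_of_nonneg (.of_forall fun x ↦ Real.rpow_nonneg (adicMax_nonneg _ _ _) _)
          (integrable_apply_chainDepth hanti hmeas (fun j ↦ (u * (N : ℝ) ^ j) ^ p) k _)
          (.of_forall fun x ↦ Real.rpow_le_rpow (adicMax_nonneg _ _ _)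
            (adicMax_towerFun_le hN hS hB hSB hu x) hp)
    _ ≤ ∫ x in K, (u * (N : ℝ) ^ chainDepth (adicTower N S) k x) ^ p := by
        have hmono := monotone_mul_pow_rpow hu (Nat.one_le_cast.2 hN : (1 : ℝ) ≤ N) hp
        refine integral_apply_chainDepth_le hanti hmeas hmono k
          (by simp only [Measure.restrict_apply_univ, hEvol]) fun j ↦ ?_
        rw [Measure.restrict_apply (hmeas j), Measure.restrict_apply (hmeas j),
          inter_eq_left.2 ((hanti j.zero_le).trans hSK)]
        exact measure_mono inter_subset_left

lemma supMeas_towerFun (hN : 0 < N)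
    (hS : S.PairwiseDisjoint fun s ↦ adicItv N s.1 s.2) (hB : MeasurableSet B)
    (hBo : IsAdicOpen N B) (hK : MeasurableSet K) (hSK : adicTower N S 0 ⊆ K) (hKB : K ⊆ B)
    (hB1 : B ⊆ Ico 0 1) (hu : 0 ≤ u) (hp : 0 ≤ p) (hNp : (N : ℝ) ^ p ≠ N) :
    supMeas N p (volume.real K) (towerFun N S B k u) =
      u ^ p * (volume.real K + ((N : ℝ) ^ p - 1) / ((N : ℝ) ^ p - N) *
        (volume.real (adicTower N S 0) * (((N : ℝ) ^ p / N) ^ k - 1))) := by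
  have hanti := adicTower_antitone hN S
  have hmeas := measurableSet_adicTower N S
  have hKfin : volume K ≠ ⊤ := measure_ne_top_of_subset (hKB.trans hB1) (by simp)
  have := isFiniteMeasure_restrict.2 hKfin
  have hlevel (j : ℕ) : (volume.restrict K).real (adicTower N S j) =
      volume.real (adicTower N S 0) / (N : ℝ) ^ j := by
    rw [measureReal_restrict_apply (hmeas j), inter_eq_left.2 ((hanti j.zero_le).trans hSK),
      volume_real_adicTower hN hS, inv_mul_eq_div]
  rw [supMeas_towerFun_eq_setIntegral hN hS hB hBo hK hSK hKB hB1 hu hp,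
    integral_apply_chainDepth hanti hmeas (fun j ↦ (u * (N : ℝ) ^ j) ^ p),
    measureReal_restrict_apply_univ, mul_left_comm _ (volume.real (adicTower N S 0)),
    ← sum_range_pow_succ_sub_pow_div_pow (by positivity) hNp, mul_add, Finset.mul_sum,
    Finset.mul_sum]
  simp only [hlevel, mul_pow_rpow hu (Nat.cast_nonneg N) p, pow_zero, mul_one]
  congr 1
  exact Finset.sum_congr rfl fun j _ ↦ by ring

lemma exists_supMeas_eq (hN : 1 < N) (hp : 1 < p) (hu : 0 ≤ u) {κ β D : ℝ} (hκ : 0 < κ)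
    (hκβ : κ ≤ β) (hβ : β ≤ 1) (hD : 0 ≤ D) :
    ∃ φ : ℝ → ℝ, Measurable φ ∧ (∀ x, 0 ≤ φ x) ∧ (∫ x in Ico (0 : ℝ) 1, φ x) = u * β ∧
      (∫ x in Ico (0 : ℝ) 1, φ x ^ p) = u ^ p * (β + D) ∧
      supMeas N p κ φ = u ^ p * (κ + ((N : ℝ) ^ p - 1) / ((N : ℝ) ^ p - N) * D) := by
  have hN0 : 0 < N := by lia
  have hNp : (N : ℝ) < (N : ℝ) ^ p := Real.self_lt_rpow_of_one_lt (Nat.one_lt_cast.2 hN) hp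
  obtain ⟨k, θ, hθ, hθκ, rfl⟩ :=
    exists_mul_pow_sub_one_eq ((one_lt_div (by positivity)).2 hNp) hD hκ
  obtain ⟨S, hS, hcover⟩ := (isAdicOpen_Ico_zero hN θ).exists_partition hN0
  rw [← adicTower_zero] at hcover
  have hSK : adicTower N S 0 ⊆ Ico 0 κ := hcover ▸ Ico_subset_Ico_right hθκ
  have hKB : Ico 0 κ ⊆ Ico 0 β := Ico_subset_Ico_right hκβ
  have hB1 : Ico 0 β ⊆ Ico 0 1 := Ico_subset_Ico_right hβ
  have hvol {b : ℝ} (hb : 0 ≤ b) : volume.real (Ico 0 b) = b := by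
    rw [Real.volume_real_Ico_of_le hb, sub_zero]
  refine ⟨towerFun N S (Ico 0 β) k u, measurable_towerFun N S measurableSet_Ico k u,
    towerFun_nonneg N S _ k hu, ?_, ?_, ?_⟩
  · rw [setIntegral_towerFun_of_isSaturated hN0 hS measurableSet_Ico (hSK.trans hKB)
      measurableSet_Ico (by simp)
      (isSaturated_of_adicTower_zero_subset ((hSK.trans hKB).trans hB1)), inter_eq_left.2 hB1,
      hvol (hκ.le.trans hκβ)]
  · rw [setIntegral_towerFun_rpow_of_subset hN0 hS measurableSet_Ico (hSK.trans hKB) hB1 (by simp)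
      hu (by linarith), hcover, hvol hθ, hvol (hκ.le.trans hκβ)]
  · have hsup := supMeas_towerFun (k := k) hN0 hS measurableSet_Ico (isAdicOpen_Ico_zero hN β)
      measurableSet_Ico hSK hKB hB1 hu (by linarith) hNp.ne'
    rwa [hcover, hvol hθ, hvol hκ.le] at hsup

end SupMeas

theorem stmt7 (N : ℕ) (hN : 2 ≤ N) (p f F κ : ℝ) (hp : 1 < p)
    (hf : 0 < f) (hF : 0 < F) (hfF : f ^ p ≤ F) (hκ : κ ∈ Set.Ioc (0:ℝ) 1)
    (u₀ : ℝ) (hu₀f : f ≤ u₀) (hu₀ : u₀ ≤ min ((F / f) ^ (1 / (p - 1))) (f / κ)) :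
    ∃ φ : ℝ → ℝ, Measurable φ ∧ (∀ x ∈ Set.Ico (0:ℝ) 1, 0 ≤ φ x) ∧
      (∫ x in Set.Ico (0:ℝ) 1, φ x) = f ∧ (∫ x in Set.Ico (0:ℝ) 1, φ x ^ p) = F ∧
      supMeas N p κ φ =
        κ * u₀ ^ p + (((N : ℝ) ^ p - 1) / ((N : ℝ) ^ p - N)) * (F - u₀ ^ (p - 1) * f) := by
  have hu : 0 < u₀ := hf.trans_le hu₀f
  obtain ⟨hu₁, hu₂⟩ := le_min_iff.1 hu₀
  have hκβ : κ ≤ f / u₀ := (le_div_comm₀ hu hκ.1).1 hu₂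
  have hβ : f / u₀ ≤ 1 := (div_le_one hu).2 hu₀f
  have hD : 0 ≤ (F - u₀ ^ (p - 1) * f) / u₀ ^ p :=
    div_nonneg (sub_nonneg.2 (rpow_sub_one_mul_le hp hf hF.le hu.le hu₁)) (by positivity)
  have hpow : u₀ ^ p = u₀ ^ (p - 1) * u₀ := by
    rw [← Real.rpow_add_one hu.ne', sub_add_cancel]
  obtain ⟨φ, hφm, hφ0, hφf, hφF, hφsup⟩ := exists_supMeas_eq hN hp hu.le hκ.1 hκβ hβ hD
  refine ⟨φ, hφm, fun x _ ↦ hφ0 x, ?_, ?_, ?_⟩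
  · rw [hφf, mul_div_cancel₀ f hu.ne']
  · rw [hφF, mul_add, mul_div_cancel₀ _ (by positivity), hpow]
    field_simp
    ring
  · rw [hφsup, mul_add, mul_left_comm, mul_div_cancel₀ _ (by positivity), mul_comm κ]
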